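/- arXiv:math/0602392 — 2 statements merged into one kernel-verified Lean document; each statement's English description precedes it below -/
import Mathlib

section
/- For every positive integer n and all integers a, b, the following are equivalent: (i) gcd(a, b, n) = 1; (ii) there exists a matrix M ∈ SL(2, ℤ) whose first column (M₀₀, M₁₀) satisfies M₀₀ ≡ a (mod n) and M₁₀ ≡ b (mod n). Consequently, the orbit of the point [(1/n, 0)] ∈ ℝ²/ℤ² under the linear action of SL(2, ℤ) is exactly the set of points [(a/n, b/n)] with a, b, n ∈ ℤ and gcd(a, b, n) = 1, i.e. SL(2, ℤ) acts transitively on the set 𝕋²(n) of points of exact order n in the torus ℝ²/ℤ². -/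
open Matrix

/-- The point of the torus `ℝ²/ℤ² = (ℝ/ℤ) × (ℝ/ℤ)` with representative `(x, y) ∈ ℝ²`. -/
noncomputable def torusPt (x y : ℝ) : AddCircle (1 : ℝ) × AddCircle (1 : ℝ) :=
  ((x : AddCircle (1 : ℝ)), (y : AddCircle (1 : ℝ)))

theorem aux_lift (n : ℤ) (a b : ℤ) (ha : a ≠ 0)
    (h : ∀ p : ℕ, p.Prime → (p : ℤ) ∣ a → (p : ℤ) ∣ b → ¬ (p : ℤ) ∣ n) :
    ∃ t : ℤ, IsCoprime a (b + t * n) := by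
  classical
  set S := a.natAbs.primeFactors.filter (fun p : ℕ => ¬ (p : ℤ) ∣ b) with hS
  refine ⟨((∏ p ∈ S, p : ℕ) : ℤ), ?_⟩
  rw [Int.isCoprime_iff_gcd_eq_one]
  by_contra hg
  obtain ⟨p, hp, hpd⟩ := Nat.exists_prime_and_dvd hg
  have hpa : (p : ℤ) ∣ a := (Int.natCast_dvd_natCast.mpr hpd).trans (Int.gcd_dvd_left _ _)
  have hpb : (p : ℤ) ∣ _ := (Int.natCast_dvd_natCast.mpr hpd).trans (Int.gcd_dvd_right _ _)
  by_cases hb : (p : ℤ) ∣ b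
  · have h1 := (Int.dvd_add_right hb).mp hpb
    rcases (Nat.prime_iff_prime_int.mp hp).dvd_or_dvd h1 with h2 | h2
    · rw [Int.natCast_dvd_natCast] at h2
      obtain ⟨q, hq, hpq⟩ := (hp.prime.dvd_finsetProd_iff _).mp h2
      rw [hS, Finset.mem_filter] at hq
      have := (Nat.prime_dvd_prime_iff_eq hp (Nat.prime_of_mem_primeFactors hq.1)).mp hpq
      subst this
      exact hq.2 hb
    · exact h p hp hpa hb h2
  · have hm : p ∈ S := by
      rw [hS, Finset.mem_filter, Nat.mem_primeFactors]
      exact ⟨⟨hp, Int.natCast_dvd.mp hpa, by simpa using ha⟩, hb⟩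
    have h2 : (p : ℤ) ∣ ((∏ p ∈ S, p : ℕ) : ℤ) :=
      Int.natCast_dvd_natCast.mpr (Finset.dvd_prod_of_mem _ hm)
    exact hb ((Int.dvd_add_left (h2.mul_right n)).mp hpb)

theorem aux_gcd (n : ℕ) (a b : ℤ) : Int.gcd (Int.gcd a b) (n : ℤ) = 1 ↔
    ∀ p : ℕ, p.Prime → (p : ℤ) ∣ a → (p : ℤ) ∣ b → ¬ (p : ℤ) ∣ n := by
  constructor
  · intro h p hp ha hb hn
    have := Int.dvd_gcd (Int.natCast_dvd_natCast.mpr (Int.dvd_gcd ha hb)) hn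
    rw [h] at this
    exact hp.one_lt.ne' (Nat.dvd_one.mp this)
  · intro h
    by_contra hg
    obtain ⟨p, hp, hpd⟩ := Nat.exists_prime_and_dvd hg
    have h1 : (p : ℤ) ∣ (Int.gcd a b : ℤ) :=
      (Int.natCast_dvd_natCast.mpr hpd).trans (Int.gcd_dvd_left _ _)
    exact h p hp (h1.trans (Int.gcd_dvd_left _ _)) (h1.trans (Int.gcd_dvd_right _ _))
      ((Int.natCast_dvd_natCast.mpr hpd).trans (Int.gcd_dvd_right _ _))

theorem aux_one (n : ℕ) (hn : 0 < n) (a b : ℤ) : Int.gcd (Int.gcd a b) (n : ℤ) = 1 ↔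
      ∃ M : Matrix.SpecialLinearGroup (Fin 2) ℤ,
        (M : Matrix (Fin 2) (Fin 2) ℤ) 0 0 ≡ a [ZMOD (n : ℤ)] ∧
        (M : Matrix (Fin 2) (Fin 2) ℤ) 1 0 ≡ b [ZMOD (n : ℤ)] := by
  rw [aux_gcd]
  constructor
  · intro h
    obtain ⟨a', ha', haa, h'⟩ : ∃ a' : ℤ, a' ≠ 0 ∧ a' ≡ a [ZMOD n] ∧
        ∀ p : ℕ, p.Prime → (p : ℤ) ∣ a' → (p : ℤ) ∣ b → ¬ (p : ℤ) ∣ n := by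
      by_cases ha : a = 0
      · subst ha
        exact ⟨n, by exact_mod_cast hn.ne', by simp [Int.ModEq],
          fun p hp _ h2 => h p hp (dvd_zero _) h2⟩
      · exact ⟨a, ha, rfl, h⟩
    obtain ⟨t, u, v, huv⟩ := aux_lift n a' b ha' h'
    refine ⟨⟨!![a', -v; b + t * n, u], ?_⟩, ?_, ?_⟩
    · rw [Matrix.det_fin_two_of]; linarith
    · simpa using haa
    · simp [Int.ModEq]
  · rintro ⟨M, h0, h1⟩ p hp ha hb hn'
    have hd := M.det_coe
    rw [Matrix.det_fin_two] at hd
    have e0 : (p : ℤ) ∣ (M : Matrix (Fin 2) (Fin 2) ℤ) 0 0 :=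
      (Int.ModEq.dvd_iff (h0.of_dvd hn')).mpr ha
    have e1 : (p : ℤ) ∣ (M : Matrix (Fin 2) (Fin 2) ℤ) 1 0 :=
      (Int.ModEq.dvd_iff (h1.of_dvd hn')).mpr hb
    have : (p : ℤ) ∣ 1 := hd ▸ dvd_sub (e0.mul_right _) (e1.mul_left _)
    exact (Nat.prime_iff_prime_int.mp hp).not_dvd_one this

theorem aux_zero (n : ℕ) (hn : 0 < n) (c : ℤ) :
    (((c : ℝ) / n : ℝ) : AddCircle (1 : ℝ)) = 0 ↔ (n : ℤ) ∣ c := by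
  have hn' : (n : ℝ) ≠ 0 := by exact_mod_cast hn.ne'
  rw [AddCircle.coe_eq_zero_iff]
  constructor
  · rintro ⟨k, hk⟩
    refine ⟨k, ?_⟩
    rw [zsmul_eq_mul, mul_one, eq_div_iff hn'] at hk
    have : c = k * n := by exact_mod_cast hk.symm
    rw [this, mul_comm]
  · rintro ⟨k, rfl⟩
    refine ⟨k, ?_⟩
    push_cast
    field_simp
    simp

theorem aux_congr (n : ℕ) (hn : 0 < n) (c d : ℤ) (h : c ≡ d [ZMOD n]) :
    (((c : ℝ) / n : ℝ) : AddCircle (1 : ℝ)) = (((d : ℝ) / n : ℝ) : AddCircle (1 : ℝ)) := by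
  rw [← sub_eq_zero, ← AddCircle.coe_sub, ← sub_div, ← Int.cast_sub, aux_zero n hn]
  exact h.symm.dvd

theorem aux_smul (n : ℕ) (hn : 0 < n) (m : ℕ) (a b : ℤ) :
    m • torusPt ((a : ℝ) / n) ((b : ℝ) / n) = 0 ↔ (n : ℤ) ∣ m * a ∧ (n : ℤ) ∣ m * b := by
  rw [← aux_zero n hn, ← aux_zero n hn, torusPt, Prod.smul_mk, Prod.mk_eq_zero,
    ← AddCircle.coe_nsmul, ← AddCircle.coe_nsmul]
  simp only [nsmul_eq_mul]
  push_cast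
  rw [mul_div_assoc, mul_div_assoc]

theorem aux_rep (n : ℕ) (hn : 0 < n) (x : AddCircle (1 : ℝ)) (hx : n • x = 0) :
    ∃ a : ℤ, x = (((a : ℝ) / n : ℝ) : AddCircle (1 : ℝ)) := by
  have hn' : (n : ℝ) ≠ 0 := by exact_mod_cast hn.ne'
  induction x using QuotientAddGroup.induction_on with
  | H r =>
    have hx' : ((n • r : ℝ) : AddCircle (1 : ℝ)) = 0 := hx
    obtain ⟨k, hk⟩ := AddCircle.coe_eq_zero_iff (1 : ℝ) |>.mp hx'
    refine ⟨k, ?_⟩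
    have : r = (k : ℝ) / n := by
      rw [eq_div_iff hn']
      simp only [zsmul_eq_mul, mul_one, nsmul_eq_mul] at hk
      rw [hk, mul_comm]
    rw [this]

theorem aux_order (n : ℕ) (hn : 0 < n) (a b : ℤ) :
    addOrderOf (torusPt ((a : ℝ) / n) ((b : ℝ) / n)) = n ↔
      Int.gcd (Int.gcd a b) (n : ℤ) = 1 := by
  constructor
  · intro h
    rw [aux_gcd]
    rintro p hp ⟨a', rfl⟩ ⟨b', rfl⟩ hpn
    obtain ⟨m, rfl⟩ := Int.natCast_dvd_natCast.mp hpn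
    have hm : 0 < m := Nat.pos_of_mul_pos_left hn
    have h0 := (aux_smul (p * m) hn m (p * a') (p * b')).mpr
      ⟨⟨a', by push_cast; ring⟩, ⟨b', by push_cast; ring⟩⟩
    have h1 := addOrderOf_dvd_of_nsmul_eq_zero h0
    rw [h] at h1
    have h2 := Nat.le_of_dvd hm h1
    nlinarith [hp.two_le]
  · intro h
    apply Nat.dvd_antisymm
    · exact addOrderOf_dvd_of_nsmul_eq_zero
        ((aux_smul n hn n a b).mpr ⟨dvd_mul_right _ _, dvd_mul_right _ _⟩)
    · obtain ⟨h1, h2⟩ := (aux_smul n hn _ a b).mp (addOrderOf_nsmul_eq_zero _)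
      generalize addOrderOf (torusPt ((a : ℝ) / n) ((b : ℝ) / n)) = m at h1 h2
      have e1 := Int.gcd_eq_gcd_ab a b
      have e2 := Int.gcd_eq_gcd_ab (Int.gcd a b) n
      rw [h] at e2
      have h3 : (n : ℤ) ∣ m * (Int.gcd a b : ℤ) := by
        rw [e1, mul_add, ← mul_assoc, ← mul_assoc]
        exact dvd_add (h1.mul_right _) (h2.mul_right _)
      have h4 : (n : ℤ) ∣ m * ((1 : ℕ) : ℤ) := by
        rw [e2, mul_add, ← mul_assoc, ← mul_assoc]
        exact dvd_add (h3.mul_right _) ((dvd_mul_left _ _).mul_right _)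
      simpa [Int.natCast_dvd_natCast] using h4

/-- For every positive integer `n` and all integers `a, b`:
`gcd(a, b, n) = 1` iff there is `M ∈ SL(2, ℤ)` with first column `≡ (a, b) mod n`.
Consequently the `SL(2, ℤ)`-orbit of `[(1/n, 0)] ∈ ℝ²/ℤ²` is exactly the set of points
`[(a/n, b/n)]` with `gcd(a, b, n) = 1`, which is exactly the set `𝕋²(n)` of points of
exact (additive) order `n`; in particular `SL(2, ℤ)` acts transitively on `𝕋²(n)`. -/
theorem stmt0 (n : ℕ) (hn : 0 < n) :
    (∀ a b : ℤ, Int.gcd (Int.gcd a b) (n : ℤ) = 1 ↔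
      ∃ M : Matrix.SpecialLinearGroup (Fin 2) ℤ,
        (M : Matrix (Fin 2) (Fin 2) ℤ) 0 0 ≡ a [ZMOD (n : ℤ)] ∧
        (M : Matrix (Fin 2) (Fin 2) ℤ) 1 0 ≡ b [ZMOD (n : ℤ)]) ∧
    ({p : AddCircle (1 : ℝ) × AddCircle (1 : ℝ) |
        ∃ M : Matrix.SpecialLinearGroup (Fin 2) ℤ,
          p = torusPt (((M : Matrix (Fin 2) (Fin 2) ℤ) 0 0 : ℝ) / n)
                (((M : Matrix (Fin 2) (Fin 2) ℤ) 1 0 : ℝ) / n)} =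
      {p | ∃ a b : ℤ, Int.gcd (Int.gcd a b) (n : ℤ) = 1 ∧
        p = torusPt ((a : ℝ) / n) ((b : ℝ) / n)}) ∧
    ({p : AddCircle (1 : ℝ) × AddCircle (1 : ℝ) |
        ∃ M : Matrix.SpecialLinearGroup (Fin 2) ℤ,
          p = torusPt (((M : Matrix (Fin 2) (Fin 2) ℤ) 0 0 : ℝ) / n)
                (((M : Matrix (Fin 2) (Fin 2) ℤ) 1 0 : ℝ) / n)} =
      {p : AddCircle (1 : ℝ) × AddCircle (1 : ℝ) | addOrderOf p = n}) := by
  have key : ({p : AddCircle (1 : ℝ) × AddCircle (1 : ℝ) |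
        ∃ M : Matrix.SpecialLinearGroup (Fin 2) ℤ,
          p = torusPt (((M : Matrix (Fin 2) (Fin 2) ℤ) 0 0 : ℝ) / n)
                (((M : Matrix (Fin 2) (Fin 2) ℤ) 1 0 : ℝ) / n)} =
      {p | ∃ a b : ℤ, Int.gcd (Int.gcd a b) (n : ℤ) = 1 ∧
        p = torusPt ((a : ℝ) / n) ((b : ℝ) / n)}) := by
    ext p
    constructor
    · rintro ⟨M, rfl⟩
      exact ⟨_, _, (aux_one n hn _ _).mpr ⟨M, rfl, rfl⟩, rfl⟩
    · rintro ⟨a, b, h, rfl⟩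
      obtain ⟨M, h0, h1⟩ := (aux_one n hn a b).mp h
      refine ⟨M, ?_⟩
      rw [torusPt, torusPt, aux_congr n hn _ _ h0, aux_congr n hn _ _ h1]
  refine ⟨aux_one n hn, key, key.trans ?_⟩
  ext p
  constructor
  · rintro ⟨a, b, h, rfl⟩
    exact (aux_order n hn a b).mpr h
  · intro h
    have h : addOrderOf p = n := h
    have h0 : n • p = 0 := by
      have := addOrderOf_nsmul_eq_zero p
      rwa [h] at this
    obtain ⟨x, y⟩ := p
    rw [Prod.smul_mk, Prod.mk_eq_zero] at h0
    obtain ⟨a, rfl⟩ := aux_rep n hn x h0.1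
    obtain ⟨b, rfl⟩ := aux_rep n hn y h0.2
    exact ⟨a, b, (aux_order n hn a b).mp h, rfl⟩
end

section
/- Let N(T) be the number of pairs (x, y) ∈ ℤ² with gcd(x, y) = 1 and x² + y² < T². Then N(T)/T² tends to π/ζ(2) = 6/π as T → ∞; i.e. the number of primitive integer lattice points (points visible from the origin) in the open disk of radius T is asymptotically (6/π)·T². -/
open Real Filter

/-- `N(T)`: the number of pairs `(x, y) ∈ ℤ²` with `gcd(x, y) = 1` and `x² + y² < T²`
(primitive lattice points, i.e. points visible from the origin, in the open disk of
radius `T`). -/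
noncomputable def primCount (T : ℝ) : ℕ :=
  Nat.card {p : ℤ × ℤ // Int.gcd p.1 p.2 = 1 ∧ ((p.1 : ℝ) ^ 2 + (p.2 : ℝ) ^ 2 < T ^ 2)}

open scoped ArithmeticFunction.Moebius Pointwise Topology

noncomputable def latS (T : ℝ) : Finset (ℤ × ℤ) :=
  ((Finset.Icc (-⌊T⌋) ⌊T⌋) ×ˢ (Finset.Icc (-⌊T⌋) ⌊T⌋)).filter
    (fun p => p ≠ 0 ∧ ((p.1 : ℝ) ^ 2 + (p.2 : ℝ) ^ 2 < T ^ 2))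

lemma lat_aux {T : ℝ} (hT : 0 ≤ T) {x y : ℤ} (h : (x : ℝ) ^ 2 + (y : ℝ) ^ 2 < T ^ 2) :
    -⌊T⌋ ≤ x ∧ x ≤ ⌊T⌋ := by
  have h1 : |(x : ℝ)| < T := abs_lt_of_sq_lt_sq (by nlinarith [sq_nonneg (y : ℝ)]) hT
  rw [abs_lt] at h1
  constructor
  · have : -x ≤ ⌊T⌋ := Int.le_floor.mpr (by push_cast; linarith)
    linarith
  · exact Int.le_floor.mpr h1.2.le

lemma mem_latS {T : ℝ} (hT : 0 ≤ T) (p : ℤ × ℤ) :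
    p ∈ latS T ↔ p ≠ 0 ∧ ((p.1 : ℝ) ^ 2 + (p.2 : ℝ) ^ 2 < T ^ 2) := by
  simp only [latS, Finset.mem_filter, Finset.mem_product, Finset.mem_Icc]
  constructor
  · exact fun h => h.2
  · intro h
    exact ⟨⟨lat_aux hT h.2, lat_aux hT (by rw [add_comm]; exact h.2)⟩, h⟩

lemma latS_card_le {T : ℝ} (hT : 0 ≤ T) : ((latS T).card : ℝ) ≤ 9 * T ^ 2 := by
  rcases lt_or_ge T 1 with h | h
  · have : latS T = ∅ := by
      ext p
      rw [mem_latS hT]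
      simp only [Finset.notMem_empty, iff_false, not_and, not_lt]
      intro hp
      have h1 : 1 ≤ p.1 ^ 2 + p.2 ^ 2 := by
        by_contra! hc
        apply hp
        have a := sq_nonneg p.1
        have b := sq_nonneg p.2
        have : p.1 ^ 2 = 0 := by linarith
        have : p.2 ^ 2 = 0 := by linarith
        ext <;> simp_all
      have h2 : (1 : ℝ) ≤ (p.1 : ℝ) ^ 2 + (p.2 : ℝ) ^ 2 := by exact_mod_cast h1
      nlinarith
    rw [this]; simp; positivity
  · have h0 : 0 ≤ ⌊T⌋ := Int.floor_nonneg.mpr hT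
    have h1 : ((latS T).card : ℤ) ≤ (2 * ⌊T⌋ + 1) * (2 * ⌊T⌋ + 1) := by
      have := Finset.card_filter_le ((Finset.Icc (-⌊T⌋) ⌊T⌋) ×ˢ (Finset.Icc (-⌊T⌋) ⌊T⌋))
        (fun p => p ≠ 0 ∧ ((p.1 : ℝ) ^ 2 + (p.2 : ℝ) ^ 2 < T ^ 2))
      rw [Finset.card_product, Int.card_Icc] at this
      have h2 : ((⌊T⌋ + 1 - -⌊T⌋).toNat : ℤ) = 2 * ⌊T⌋ + 1 := by omega
      rw [← h2]
      exact (Int.ofNat_le.mpr this).trans (by push_cast; rfl)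
    have h3 : ((latS T).card : ℝ) ≤ (2 * ⌊T⌋ + 1) * (2 * ⌊T⌋ + 1) := by exact_mod_cast h1
    have h4 := Int.floor_le T
    have h5 : (0 : ℝ) ≤ ⌊T⌋ := by exact_mod_cast h0
    nlinarith

lemma moebius_gcd (g : ℕ) :
    ∑ d ∈ g.divisors, μ d = if g = 1 then 1 else 0 := by
  have := congrArg (fun f => f g) ArithmeticFunction.coe_zeta_mul_moebius
  simp only [ArithmeticFunction.coe_zeta_mul_apply, ArithmeticFunction.one_apply] at this
  exact this

lemma card_dvd {T : ℝ} (hT : 0 ≤ T) {d : ℕ} (hd : d ≠ 0) :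
    ((latS T).filter (fun p => d ∣ Int.gcd p.1 p.2)).card = (latS (T / d)).card := by
  symm
  have hd' : (0 : ℝ) < d := by positivity
  have hdz : (d : ℤ) ≠ 0 := by exact_mod_cast hd
  have key : ∀ x y : ℤ, ((x : ℝ) ^ 2 + (y : ℝ) ^ 2 < (T / d) ^ 2) ↔
      ((((d : ℤ) * x : ℤ) : ℝ) ^ 2 + (((d : ℤ) * y : ℤ) : ℝ) ^ 2 < T ^ 2) := by
    intro x y
    push_cast
    rw [div_pow, lt_div_iff₀ (by positivity)]
    ring_nf
  apply Finset.card_bij (fun p _ => ((d : ℤ) * p.1, (d : ℤ) * p.2))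
  · intro p hp
    rw [mem_latS (by positivity), key] at hp
    rw [Finset.mem_filter, mem_latS hT]
    refine ⟨⟨?_, hp.2⟩, ?_⟩
    · intro h
      apply hp.1
      simp only [Prod.mk_eq_zero, mul_eq_zero, hdz, false_or] at h
      ext <;> simp [h]
    · rw [Int.gcd_mul_left]; simp
  · intro p _ q _ h
    simp only [Prod.mk.injEq, mul_eq_mul_left_iff, hdz, or_false] at h
    ext <;> simp [h]
  · rintro ⟨x, y⟩ hp
    rw [Finset.mem_filter, mem_latS hT] at hp
    obtain ⟨⟨h1, h2⟩, h3⟩ := hp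
    have hx : (d : ℤ) ∣ x := (Int.natCast_dvd_natCast.mpr h3).trans (Int.gcd_dvd_left ..)
    have hy : (d : ℤ) ∣ y := (Int.natCast_dvd_natCast.mpr h3).trans (Int.gcd_dvd_right ..)
    obtain ⟨a, rfl⟩ := hx
    obtain ⟨b, rfl⟩ := hy
    refine ⟨(a, b), ?_, rfl⟩
    rw [mem_latS (by positivity), key]
    refine ⟨?_, h2⟩
    intro h
    apply h1
    simp only [Prod.mk_eq_zero] at h
    simp [h]

lemma primCount_eq {T : ℝ} (hT : 0 ≤ T) :
    (primCount T : ℝ) = ∑' d : ℕ, (μ d : ℝ) * (latS (T / d)).card := by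
  have h1 : primCount T = ((latS T).filter (fun p => Int.gcd p.1 p.2 = 1)).card := by
    unfold primCount
    apply Nat.subtype_card
    intro p
    rw [Finset.mem_filter, mem_latS hT]
    constructor
    · exact fun h => ⟨h.2, h.1.2⟩
    · rintro ⟨h1, h2⟩
      refine ⟨⟨?_, h2⟩, h1⟩
      rintro rfl
      simp at h1
  have hg : ∀ p ∈ latS T, Int.gcd p.1 p.2 ≠ 0 := by
    intro p hp h
    rw [mem_latS hT] at hp
    rw [Int.gcd_eq_zero_iff] at h
    exact hp.1 (Prod.ext h.1 h.2)
  have hle : ∀ p ∈ latS T, ∀ d, d ∣ Int.gcd p.1 p.2 → d ∈ Finset.Icc 1 ⌊T⌋₊ := by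
    intro p hp d hd
    have h0 : d ≠ 0 := by
      rintro rfl
      exact hg p hp (Nat.eq_zero_of_zero_dvd hd)
    rw [Finset.mem_Icc]
    refine ⟨Nat.one_le_iff_ne_zero.mpr h0, ?_⟩
    by_contra! hc
    have hTd : T < d := Nat.lt_of_floor_lt hc
    have hpos : 0 < ((latS T).filter (fun p => d ∣ Int.gcd p.1 p.2)).card :=
      Finset.card_pos.mpr ⟨p, Finset.mem_filter.mpr ⟨hp, hd⟩⟩
    rw [card_dvd hT h0, Finset.card_pos] at hpos
    obtain ⟨q, hq⟩ := hpos
    simp only [latS, Finset.mem_filter, Finset.mem_product, Finset.mem_Icc] at hq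
    have : ⌊T / d⌋ = 0 := by
      rw [Int.floor_eq_zero_iff]
      exact ⟨by positivity, by rw [div_lt_one (hT.trans_lt hTd)]; exact hTd⟩
    rw [this] at hq
    apply hq.2.1
    ext <;> simp <;> omega
  rw [tsum_eq_sum (s := Finset.Icc 1 ⌊T⌋₊)]
  · have h2 : ((primCount T : ℤ)) = ∑ d ∈ Finset.Icc 1 ⌊T⌋₊, μ d * (latS (T / d)).card := by
      rw [h1, Finset.card_filter]
      push_cast
      calc _ = ∑ p ∈ latS T, ∑ d ∈ Finset.Icc 1 ⌊T⌋₊,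
            if d ∣ Int.gcd p.1 p.2 then μ d else 0 := by
            apply Finset.sum_congr rfl
            intro p hp
            rw [← moebius_gcd _, ← Finset.sum_filter]
            apply Finset.sum_congr _ fun _ _ => rfl
            ext d
            rw [Finset.mem_filter, Nat.mem_divisors]
            exact ⟨fun h => ⟨hle p hp d h.1, h.1⟩, fun h => ⟨h.2, hg p hp⟩⟩
        _ = _ := by
            rw [Finset.sum_comm]
            apply Finset.sum_congr rfl
            intro d hd
            rw [Finset.mem_Icc] at hd
            rw [← card_dvd hT (by omega), ← Finset.sum_filter, Finset.sum_const]
            simp [mul_comm]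
    exact_mod_cast h2
  · intro d hd
    rcases eq_or_ne d 0 with rfl | h0
    · simp
    · rw [← card_dvd hT h0, Finset.filter_eq_empty_iff.mpr]
      · simp
      · intro p hp h
        exact hd (hle p hp d h)

def uDisk : Set (Fin 2 → ℝ) := {v | v 0 ^ 2 + v 1 ^ 2 < 1}

lemma uDisk_eq : uDisk = (WithLp.toLp 2) ⁻¹' (Metric.ball (0 : EuclideanSpace ℝ (Fin 2)) 1) := by
  ext v
  simp [uDisk, EuclideanSpace.norm_eq, Real.sqrt_lt']

lemma uDisk_vol : MeasureTheory.volume.real uDisk = π := by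
  rw [uDisk_eq, MeasureTheory.measureReal_def,
    (PiLp.volume_preserving_toLp (Fin 2)).measure_preimage
      Metric.isOpen_ball.measurableSet.nullMeasurableSet, EuclideanSpace.volume_ball_fin_two]
  simp [Real.pi_pos.le]

lemma uDisk_convex : Convex ℝ uDisk := by
  rw [uDisk_eq]
  exact (convex_ball _ _).linear_preimage (WithLp.linearEquiv 2 ℝ (Fin 2 → ℝ)).symm.toLinearMap

lemma uDisk_open : IsOpen uDisk :=
  isOpen_lt (by fun_prop) (by fun_prop)

lemma uDisk_bdd : Bornology.IsBounded uDisk := by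
  rw [isBounded_iff_forall_norm_le]
  refine ⟨1, fun v hv => ?_⟩
  simp only [uDisk, Set.mem_ofPred_eq] at hv
  rw [pi_norm_le_iff_of_nonneg zero_le_one]
  intro i
  rw [Real.norm_eq_abs, abs_le_one_iff_mul_self_le_one]
  fin_cases i <;> simp <;> nlinarith [sq_nonneg (v 0), sq_nonneg (v 1)]

lemma uDisk_smul {x y : ℝ} (hx : 0 < x) (hxy : x ≤ y) : x • uDisk ⊆ y • uDisk := by
  intro v
  rw [Set.mem_smul_set_iff_inv_smul_mem₀ hx.ne',
    Set.mem_smul_set_iff_inv_smul_mem₀ (hx.trans_le hxy).ne']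
  simp only [uDisk, Set.mem_ofPred_eq, Pi.smul_apply, smul_eq_mul, mul_pow, ← mul_add]
  intro h
  refine lt_of_le_of_lt ?_ h
  have hy : 0 < y := hx.trans_le hxy
  gcongr

lemma card_uDisk {T : ℝ} (hT : 0 < T) :
    Nat.card ↑(uDisk ∩ T⁻¹ • (Submodule.span ℤ (Set.range (Pi.basisFun ℝ (Fin 2))) : Set (Fin 2 → ℝ)))
      = (latS T).card + 1 := by
  have h0 : (0 : ℤ × ℤ) ∉ latS T := by simp [latS]
  rw [← Finset.card_insert_of_notMem h0,
    ← Nat.subtype_card (p := fun p : ℤ × ℤ => (p.1 : ℝ) ^ 2 + (p.2 : ℝ) ^ 2 < T ^ 2)]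
  · symm
    have key : ∀ a b : ℝ, (T⁻¹ * a) ^ 2 + (T⁻¹ * b) ^ 2 < 1 ↔ a ^ 2 + b ^ 2 < T ^ 2 := by
      intro a b
      rw [mul_pow, mul_pow, ← mul_add, inv_pow, inv_mul_lt_iff₀ (by positivity), mul_one]
    have hL : ∀ v : Fin 2 → ℝ, v ∈ (Submodule.span ℤ (Set.range (Pi.basisFun ℝ (Fin 2)))) ↔
        ∀ i, ∃ n : ℤ, (n : ℝ) = v i := by
      intro v
      rw [Module.Basis.mem_span_iff_repr_mem]
      simp
    refine Nat.card_congr (Equiv.ofBijective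
      (fun p => ⟨fun i => T⁻¹ * (![(p.1.1 : ℝ), (p.1.2 : ℝ)] i), ?_, ?_⟩) ⟨?_, ?_⟩)
    · have := p.2
      simp only [uDisk, Set.mem_ofPred_eq]
      simpa [key] using this
    · rw [Set.mem_inv_smul_set_iff₀ hT.ne', SetLike.mem_coe, hL]
      intro i
      fin_cases i
      · exact ⟨p.1.1, by simp [hT.ne']⟩
      · exact ⟨p.1.2, by simp [hT.ne']⟩
    · rintro ⟨⟨a, b⟩, hp⟩ ⟨⟨c, d⟩, hq⟩ h
      have h' := congrArg Subtype.val h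
      have e0 := congrFun h' 0
      have e1 := congrFun h' 1
      simp [hT.ne'] at e0 e1
      simp [e0, e1]
    · rintro ⟨v, hv, hv2⟩
      rw [Set.mem_inv_smul_set_iff₀ hT.ne', SetLike.mem_coe, hL] at hv2
      obtain ⟨a, ha⟩ := hv2 0
      obtain ⟨b, hb⟩ := hv2 1
      simp only [Pi.smul_apply, smul_eq_mul] at ha hb
      have e0 : v 0 = T⁻¹ * a := by rw [ha]; field_simp
      have e1 : v 1 = T⁻¹ * b := by rw [hb]; field_simp
      simp only [uDisk, Set.mem_ofPred_eq, e0, e1, key] at hv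
      refine ⟨⟨(a, b), hv⟩, ?_⟩
      apply Subtype.ext
      funext i
      fin_cases i
      · simp [e0]
      · simp [e1]
  · intro p
    rw [Finset.mem_insert, mem_latS hT.le]
    constructor
    · rintro (rfl | h)
      · simp; positivity
      · exact h.2
    · intro h
      by_cases h0 : p = 0
      · exact Or.inl h0
      · exact Or.inr ⟨h0, h⟩

lemma gauss : Tendsto (fun T : ℝ => ((latS T).card : ℝ) / T ^ 2) atTop (𝓝 π) := by
  have h := tendsto_card_div_pow_atTop_volume' uDisk uDisk_bdd uDisk_open.measurableSet
    (uDisk_convex.addHaar_frontier _) (fun x y hx hxy => uDisk_smul hx hxy)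
  rw [uDisk_vol, Fintype.card_fin] at h
  have h2 : Tendsto (fun T : ℝ => 1 / T ^ 2) atTop (𝓝 0) := by
    simpa using (tendsto_pow_neg_atTop (𝕜 := ℝ) (n := 2) (by norm_num))
  have h3 := h.sub h2
  rw [sub_zero] at h3
  refine h3.congr' ?_
  filter_upwards [eventually_gt_atTop 0] with T hT
  rw [card_uDisk hT]
  push_cast
  ring

lemma moebius_tsum : ∑' d : ℕ, (μ d : ℝ) / (d : ℝ) ^ 2 = 6 / π ^ 2 := by
  have h := ArithmeticFunction.LSeries_zeta_mul_Lseries_moebius (s := 2) (by norm_num)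
  rw [ArithmeticFunction.LSeries_zeta_eq_riemannZeta (by norm_num), riemannZeta_two] at h
  have h2 : LSeries (fun n => ((μ n : ℤ) : ℂ)) 2 = ((∑' d : ℕ, (μ d : ℝ) / (d : ℝ) ^ 2 : ℝ) : ℂ) := by
    rw [LSeries, Complex.ofReal_tsum]
    apply tsum_congr
    intro d
    rcases eq_or_ne d 0 with rfl | hd
    · simp
    · rw [LSeries.term_of_ne_zero hd]
      push_cast
      norm_cast
  rw [h2] at h
  have h3 : π ^ 2 / 6 * (∑' d : ℕ, (μ d : ℝ) / (d : ℝ) ^ 2) = 1 := by exact_mod_cast h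
  have := Real.pi_pos
  field_simp at h3 ⊢
  linarith

/-- `N(T)/T² → π/ζ(2) = 6/π` as `T → ∞`: the number of primitive integer lattice points
in the open disk of radius `T` is asymptotically `(6/π)·T²`. -/
theorem stmt15 :
    Tendsto (fun T : ℝ => (primCount T : ℝ) / T ^ 2) atTop (nhds (6 / π)) := by
  have hpi := Real.pi_pos
  have h1 : Tendsto (fun T : ℝ => ∑' d : ℕ, (μ d : ℝ) * (latS (T / d)).card / T ^ 2) atTop
      (𝓝 (∑' d : ℕ, π * ((μ d : ℝ) / (d : ℝ) ^ 2))) := by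
    apply tendsto_tsum_of_dominated_convergence (bound := fun d : ℕ => 9 * (1 / (d : ℝ) ^ 2))
    · exact hasSum_zeta_two.summable.mul_left 9
    · intro d
      rcases eq_or_ne d 0 with rfl | hd
      · simp
      · have hd' : (0 : ℝ) < d := by positivity
        have := (gauss.comp (tendsto_id.atTop_div_const hd')).mul_const ((μ d : ℝ) / (d : ℝ) ^ 2)
        refine this.congr' ?_
        filter_upwards [eventually_gt_atTop 0] with T hT
        simp only [Function.comp, id]
        field_simp
    · filter_upwards [eventually_gt_atTop 0] with T hT
      intro d
      rcases eq_or_ne d 0 with rfl | hd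
      · simp
      · have hd' : (0 : ℝ) < d := by positivity
        have hm : |(μ d : ℝ)| ≤ 1 := by exact_mod_cast ArithmeticFunction.abs_moebius_le_one
        rw [Real.norm_eq_abs, abs_div, abs_mul, abs_of_pos (by positivity : (0 : ℝ) < T ^ 2),
          Nat.abs_cast, div_le_iff₀ (by positivity)]
        have hb := latS_card_le (T := T / d) (by positivity)
        calc _ ≤ 1 * (9 * (T / d) ^ 2) := by gcongr
          _ = _ := by field_simp
  rw [tsum_mul_left, moebius_tsum] at h1
  have e : π * (6 / π ^ 2) = 6 / π := by field_simp
  rw [e] at h1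
  refine h1.congr' ?_
  filter_upwards [eventually_ge_atTop 0] with T hT
  rw [primCount_eq hT, tsum_div_const]
end
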